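/- Let X be a cellular multipointed d-space and γ an execution path of X. The globular naturalization nat(γ) of γ is a regular Moore path. -/

import Mathlib

/- STATEMENT 15: Let X be a cellular multipointed d-space and γ an execution path of X.
The globular naturalization nat(γ) of γ (the Moore composition of the longitudinal cell
paths appearing in the cellular decomposition of γ) is a regular Moore path. -/

open Set unitInterval

noncomputable section

variable {α : Type*} {β : Type*} [TopologicalSpace α] [TopologicalSpace β]

/-- Clamp a real number into the unit interval. -/
def toI (t : ℝ) : I := Set.projIcc 0 1 zero_le_one t

/-- Normalized composition of two paths parametrized by [0,1]. -/
def normComp (γ₁ γ₂ : I → α) : I → α :=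
  fun t => if (t : ℝ) ≤ 1 / 2 then γ₁ (toI (2 * (t : ℝ))) else γ₂ (toI (2 * (t : ℝ) - 1))

/-- An element of `M(1,1)`: a non-decreasing (continuous) surjection of [0,1]. -/
def IsReparam (φ : I → I) : Prop := Monotone φ ∧ Function.Surjective φ ∧ Continuous φ

/-- An element of `𝓘(1)`: a non-decreasing continuous map [0,1] → [0,1],
not necessarily surjective. -/
def IsNondecreasing (φ : I → I) : Prop := Monotone φ ∧ Continuous φ

/-- A multipointed d-space: a space, a set of states, and a set of execution paths with
endpoints in the states, closed under non-decreasing surjective reparametrization and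
under normalized composition. -/
structure MultipointedDSpace (α : Type*) [TopologicalSpace α] where
  states : Set α
  exec : Set (I → α)
  exec_cont : ∀ γ ∈ exec, Continuous γ
  exec_src : ∀ γ ∈ exec, γ 0 ∈ states
  exec_tgt : ∀ γ ∈ exec, γ 1 ∈ states
  exec_reparam : ∀ γ ∈ exec, ∀ φ : I → I, IsReparam φ → γ ∘ φ ∈ exec
  exec_norm : ∀ γ₁ ∈ exec, ∀ γ₂ ∈ exec, γ₁ 1 = γ₂ 0 → normComp γ₁ γ₂ ∈ exec

/-- Moore composition of a path of length `ℓ₁` with a second path. -/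
def mooreComp (ℓ₁ : ℝ) (f g : ℝ → α) : ℝ → α := fun t => if t ≤ ℓ₁ then f t else g (t - ℓ₁)

/-- `(n+1)`-fold Moore composition with prescribed lengths. -/
def mooreCompN : (n : ℕ) → (Fin (n + 1) → ℝ) → (Fin (n + 1) → ℝ → α) → ℝ → α
  | 0, _, f => f 0
  | n + 1, ℓ, f =>
      mooreComp (ℓ 0) (f 0) (mooreCompN n (fun i => ℓ i.succ) (fun i => f i.succ))

/-- `d(X)`: the set of all constant paths together with all Moore compositions
`(γ₁∘φ₁∘μ_{ℓ₁}) * ⋯ * (γₙ∘φₙ∘μ_{ℓₙ})` with `Σ ℓᵢ = 1`, where the `γᵢ` are execution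
paths and the `φᵢ` are non-decreasing continuous self-maps of [0,1]
(`μ_ℓ(t) = t/ℓ`). -/
def dPaths (X : MultipointedDSpace α) : Set (I → α) :=
  {Γ | (∃ x, ∀ t, Γ t = x) ∨
    ∃ (n : ℕ) (ℓ : Fin (n + 1) → ℝ) (γ : Fin (n + 1) → I → α) (φ : Fin (n + 1) → I → I),
      (∀ i, 0 < ℓ i) ∧ (∑ i, ℓ i = 1) ∧ (∀ i, γ i ∈ X.exec) ∧
      (∀ i, IsNondecreasing (φ i)) ∧
      ∀ t : I, Γ t = mooreCompN n ℓ (fun i s => γ i (φ i (toI (s / ℓ i)))) (t : ℝ)}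

/-- A globular cell of a multipointed d-space `X`, of dimension `n + 1`: the data of an
attaching map `Glob^top(D^n) → X` (written as `g : D^n × [0,1] → α`, constant on
`D^n × {0}` and on `D^n × {1}`), injective on the open part, whose longitudinal paths
are execution paths of `X`. -/
structure GlobularCell (X : MultipointedDSpace α) where
  n : ℕ
  g : EuclideanSpace ℝ (Fin n) → I → α
  src : α
  tgt : α
  src_mem : src ∈ X.states
  tgt_mem : tgt ∈ X.states
  g_src : ∀ z : EuclideanSpace ℝ (Fin n), ‖z‖ ≤ 1 → g z 0 = src
  g_tgt : ∀ z : EuclideanSpace ℝ (Fin n), ‖z‖ ≤ 1 → g z 1 = tgt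
  g_cont : ContinuousOn (fun p : EuclideanSpace ℝ (Fin n) × I => g p.1 p.2)
    ((Metric.closedBall 0 1) ×ˢ univ)
  exec_mem : ∀ z : EuclideanSpace ℝ (Fin n), ‖z‖ ≤ 1 → (fun t => g z t) ∈ X.exec
  g_inj : ∀ (z z' : EuclideanSpace ℝ (Fin n)) (t t' : I), ‖z‖ < 1 → ‖z'‖ < 1 →
    0 < (t : ℝ) → (t : ℝ) < 1 → 0 < (t' : ℝ) → (t' : ℝ) < 1 →
    g z t = g z' t' → z = z' ∧ t = t'

/-- The (open) globular cell: the image of `|Glob(D^n)| ∖ |Glob(S^{n-1})|`. -/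
def GlobularCell.openCell {X : MultipointedDSpace α} (c : GlobularCell X) : Set α :=
  {x | ∃ (z : EuclideanSpace ℝ (Fin c.n)) (t : I),
    ‖z‖ < 1 ∧ 0 < (t : ℝ) ∧ (t : ℝ) < 1 ∧ c.g z t = x}

/-- A cellular multipointed d-space: a multipointed d-space obtained by (transfinitely)
attaching globular cells to its set of states. The underlying space is Hausdorff, it is
partitioned into the states and the open globular cells, and every execution path
decomposes (uniquely) as its globular naturalization — a Moore composition of
longitudinal cell paths, each of length 1 — precomposed with a non-decreasing
continuous surjection [0,1] → [0,n+1]. -/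
structure CellularMDSpace (α : Type*) [TopologicalSpace α]
    extends MultipointedDSpace α where
  t2 : T2Space α
  ι : Type*
  cell : ι → GlobularCell toMultipointedDSpace
  cell_disjoint : Pairwise fun i j => Disjoint (cell i).openCell (cell j).openCell
  cell_states_disjoint : ∀ i, Disjoint (cell i).openCell states
  cell_cover : states ∪ ⋃ i, (cell i).openCell = univ
  exec_decomp : ∀ γ ∈ exec, ∃ (n : ℕ) (c : Fin (n + 1) → ι)
      (z : ∀ i : Fin (n + 1), EuclideanSpace ℝ (Fin (cell (c i)).n)) (φ : I → ℝ),
      (∀ i, ‖z i‖ < 1) ∧ Monotone φ ∧ Continuous φ ∧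
      φ 0 = 0 ∧ φ 1 = (n + 1 : ℝ) ∧
      ∀ t : I, γ t = mooreCompN n (fun _ => 1)
        (fun i s => (cell (c i)).g (z i) (toI s)) (φ t)

/-- A Moore path `p : [0,L] → α` is regular if it is constant or if every subinterval on
which it is constant is degenerate. -/
def IsRegularPath (L : ℝ) (p : ℝ → α) : Prop :=
  (∀ s ∈ Icc (0 : ℝ) L, ∀ t ∈ Icc (0 : ℝ) L, p s = p t) ∨
    ∀ a b : ℝ, 0 ≤ a → a ≤ b → b ≤ L → (∀ t ∈ Icc a b, p t = p a) → a = b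

lemma mooreCompN_not_const (n : ℕ) : ∀ (f : Fin (n + 1) → ℝ → α)
    (_ : ∀ i, ∀ s ∈ Ioo (0 : ℝ) 1, ∀ t ∈ Ioo (0 : ℝ) 1, f i s = f i t → s = t)
    (a b : ℝ), 0 ≤ a → a < b → b ≤ (n + 1 : ℝ) →
    (∀ s ∈ Ioo a b, ∀ t ∈ Ioo a b,
      mooreCompN n (fun _ => 1) f s = mooreCompN n (fun _ => 1) f t) → False := by
  induction n with
  | zero =>
    intro f hf a b ha hab hb h
    norm_num at hb
    have h1 := h (a + (b - a) / 3) ⟨by linarith, by linarith⟩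
      (a + 2 * (b - a) / 3) ⟨by linarith, by linarith⟩
    have h2 := hf 0 _ ⟨by linarith, by linarith⟩ _ ⟨by linarith, by linarith⟩ h1
    linarith
  | succ n ih =>
    intro f hf a b ha hab hb h
    push_cast at hb
    by_cases ha1 : a < 1
    · obtain ⟨d, had, hdb, hd1⟩ : ∃ d, a < d ∧ d ≤ b ∧ d ≤ 1 :=
        ⟨min b 1, lt_min hab ha1, min_le_left _ _, min_le_right _ _⟩
      have h1 := h (a + (d - a) / 3) ⟨by linarith, by linarith⟩
        (a + 2 * (d - a) / 3) ⟨by linarith, by linarith⟩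
      simp only [mooreCompN, mooreComp] at h1
      rw [if_pos (by linarith), if_pos (by linarith)] at h1
      have h2 := hf 0 _ ⟨by linarith, by linarith⟩ _ ⟨by linarith, by linarith⟩ h1
      linarith
    · push Not at ha1
      refine ih (fun i => f i.succ) (fun i => hf i.succ) (a - 1) (b - 1) (by linarith)
        (by linarith) (by linarith) ?_
      intro s hs t ht
      have h1 := h (s + 1) ⟨by linarith [hs.1], by linarith [hs.2]⟩
        (t + 1) ⟨by linarith [ht.1], by linarith [ht.2]⟩
      simp only [mooreCompN, mooreComp] at h1
      rw [if_neg (by linarith [hs.1]), if_neg (by linarith [ht.1])] at h1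
      simpa using h1

/-- The globular naturalization of an execution path of a cellular multipointed
d-space is regular. -/
theorem naturalization_regular (X : CellularMDSpace α) (γ : I → α) (hγ : γ ∈ X.exec)
    (n : ℕ) (c : Fin (n + 1) → X.ι)
    (z : ∀ i : Fin (n + 1), EuclideanSpace ℝ (Fin (X.cell (c i)).n)) (φ : I → ℝ)
    (hz : ∀ i, ‖z i‖ < 1) (hφm : Monotone φ) (hφc : Continuous φ)
    (hφ0 : φ 0 = 0) (hφ1 : φ 1 = (n + 1 : ℝ))
    (hdec : ∀ t : I, γ t = mooreCompN n (fun _ => 1)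
      (fun i s => (X.cell (c i)).g (z i) (toI s)) (φ t)) :
    IsRegularPath ((n + 1 : ℝ))
      (mooreCompN n (fun _ => 1) (fun i s => (X.cell (c i)).g (z i) (toI s))) := by
  refine Or.inr fun a b ha hab hb h => ?_
  by_contra hne
  refine mooreCompN_not_const n _ ?_ a b ha (lt_of_le_of_ne hab hne) hb
    (fun s hs t ht => (h s ⟨hs.1.le, hs.2.le⟩).trans (h t ⟨ht.1.le, ht.2.le⟩).symm)
  intro i s hs t ht hst
  have es : ((toI s : I) : ℝ) = s := by
    rw [toI, projIcc_of_mem zero_le_one ⟨hs.1.le, hs.2.le⟩]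
  have et : ((toI t : I) : ℝ) = t := by
    rw [toI, projIcc_of_mem zero_le_one ⟨ht.1.le, ht.2.le⟩]
  have := ((X.cell (c i)).g_inj (z i) (z i) (toI s) (toI t) (hz i) (hz i)
    (hs.1.trans_eq es.symm) (es.trans_lt hs.2) (ht.1.trans_eq et.symm) (et.trans_lt ht.2) hst).2
  rw [← es, ← et, this]

end
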